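/- The number of 6-element subsets S of the projective plane ℙ²(𝔽₄) such that no three points of S are collinear is exactly 168. -/

import Mathlib

open scoped LinearAlgebra.Projectivization

/-- No three distinct points of `S ⊆ ℙ²(𝔽₄)` are collinear (i.e. have linearly dependent
representative vectors). -/
def NoThreeCollinear (S : Set (ℙ (GaloisField 2 2) (Fin 3 → GaloisField 2 2))) : Prop :=
  ∀ p ∈ S, ∀ q ∈ S, ∀ r ∈ S, p ≠ q → p ≠ r → q ≠ r → ¬ Projectivization.Dependent ![p, q, r]


namespace Arc

/-- multiplication of 𝔽₄ encoded on 0,1,2,3 -/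
def m4 (a b : ℕ) : ℕ := (2625168384 >>> (2 * (4 * a + b))) % 4

def V0 (i : ℕ) : ℕ := (1447761891649 >>> (2 * i)) % 4
def V1 (i : ℕ) : ℕ := (1612108543684 >>> (2 * i)) % 4
def V2 (i : ℕ) : ℕ := (1839514736848 >>> (2 * i)) % 4

def det4 (x y z : ℕ) : ℕ :=
  (m4 (V0 x) ((m4 (V1 y) (V2 z)) ^^^ (m4 (V2 y) (V1 z)))) ^^^
  ((m4 (V1 x) ((m4 (V0 y) (V2 z)) ^^^ (m4 (V2 y) (V0 z)))) ^^^
  (m4 (V2 x) ((m4 (V0 y) (V1 z)) ^^^ (m4 (V1 y) (V0 z)))))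

/-- distinct and collinear (Singer cycle labelling of the points) -/
def col (x y z : ℕ) : Bool :=
  Nat.testBit 110928450031905723735293275335097212739450129994042459625291511645593257233097537094441676427644429588629664042487450410958704345088
    (((y + 21 - x) % 21) * 21 + (z + 21 - x) % 21)

theorem col_det : ∀ x < 21, ∀ y < 21, ∀ z < 21, 
    col x y z = true ↔ (x ≠ y ∧ x ≠ z ∧ y ≠ z ∧ det4 x y z = 0) := by
  decide +kernel

theorem col_symm : ∀ x < 21, ∀ y < 21, ∀ z < 21,
    col x y z = col y x z ∧ col x y z = col x z y := by
  decide +kernel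

def ok (x : ℕ) (C : List ℕ) : Bool := C.all fun y => C.all fun z => !col x y z

def f : List ℕ → List ℕ → ℕ → ℕ
  | _, _, 0 => 1
  | [], _, _+1 => 0
  | x :: L, C, k+1 => f L C (k+1) + (match ok x C with | true => f L (x :: C) k | false => 0)

theorem f_val : f [0,1,2,3,4,5,6,7,8,9,10,11,12,13,14,15,16,17,18,19,20] [] 6 = 168 := by
  decide +kernel

def P : List ℕ → List ℕ → Bool
  | _, [] => true
  | C, x :: T => ok x C && P (x :: C) T

theorem f_eq (L : List ℕ) : ∀ (C : List ℕ) (k : ℕ),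
    f L C k = (L.sublistsLen k).countP (P C) := by
  induction L with
  | nil =>
    intro C k
    cases k with
    | zero => simp [f, P]
    | succ k => simp [f]
  | cons x L ih =>
    intro C k
    cases k with
    | zero => simp [f, P]
    | succ k =>
      rw [List.sublistsLen_succ_cons, List.countP_append, List.countP_map, f, ih, ih]
      congr 1
      have h : (P C ∘ List.cons x) = fun T => ok x C && P (x :: C) T := by
        funext T; simp [P]
      rw [h]
      cases ok x C
      · simp
      · simp

def arc (C : List ℕ) : Prop := ∀ p ∈ C, ∀ q ∈ C, ∀ r ∈ C, col p q r = false

theorem arc_cons (x : ℕ) (C : List ℕ) (hC : ∀ y ∈ x :: C, y < 21) (h : arc C) :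
    ok x C = true ↔ arc (x :: C) := by
  have irr : ∀ y < 21, ∀ z < 21, col y y z = false ∧ col y z y = false ∧ col z y y = false := by
    decide +kernel
  constructor
  · intro hok
    have hok' : ∀ y ∈ C, ∀ z ∈ C, col x y z = false := by
      simpa [ok] using hok
    have hx := hC x (by simp)
    intro p hp q hq r hr
    have hp1 := hC p hp
    have hq1 := hC q hq
    have hr1 := hC r hr
    rcases List.mem_cons.1 hp with rfl | hp2
    · rcases List.mem_cons.1 hq with rfl | hq2
      · exact (irr _ hx _ hr1).1
      · rcases List.mem_cons.1 hr with rfl | hr2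
        · exact (irr _ hx _ hq1).2.1
        · exact hok' _ hq2 _ hr2
    · rcases List.mem_cons.1 hq with rfl | hq2
      · rcases List.mem_cons.1 hr with rfl | hr2
        · exact (irr _ hx _ hp1).2.2
        · rw [(col_symm _ hp1 _ hq1 _ hr1).1]; exact hok' _ hp2 _ hr2
      · rcases List.mem_cons.1 hr with rfl | hr2
        · rw [(col_symm _ hp1 _ hq1 _ hr1).2, (col_symm _ hp1 _ hr1 _ hq1).1]
          exact hok' _ hp2 _ hq2
        · exact h _ hp2 _ hq2 _ hr2
  · intro ha
    simp only [ok, List.all_eq_true, Bool.not_eq_true']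
    intro y hy z hz
    exact ha _ (by simp) _ (by simp [hy]) _ (by simp [hz])

theorem arc_mono {C D : List ℕ} (h : ∀ x ∈ C, x ∈ D) (hD : arc D) : arc C :=
  fun p hp q hq r hr => hD p (h p hp) q (h q hq) r (h r hr)

theorem P_iff (T : List ℕ) : ∀ (C : List ℕ), (∀ y ∈ T, y < 21) → (∀ y ∈ C, y < 21) → arc C →
    (P C T = true ↔ arc (T ++ C)) := by
  induction T with
  | nil => intro C _ _ h; simpa [P] using h
  | cons x T ih =>
    intro C hT hC h
    have hxC : ∀ y ∈ x :: C, y < 21 := by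
      intro y hy
      rcases List.mem_cons.1 hy with rfl | hy
      · exact hT _ (by simp)
      · exact hC _ hy
    simp only [P, Bool.and_eq_true]
    rw [arc_cons x C hxC h]
    constructor
    · rintro ⟨h1, h2⟩
      rw [ih _ (fun y hy => hT y (by simp [hy])) hxC h1] at h2
      refine arc_mono ?_ h2
      intro y hy
      simp at hy ⊢; tauto
    · intro h2
      have h1 : arc (x :: C) := by
        refine arc_mono ?_ h2
        intro y hy
        simp at hy ⊢; tauto
      refine ⟨h1, ?_⟩
      rw [ih _ (fun y hy => hT y (by simp [hy])) hxC h1]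
      refine arc_mono ?_ h2
      intro y hy
      simp at hy ⊢; tauto

theorem sublistsLen_map' {α β : Type*} (g : α → β) (L : List α) : ∀ k : ℕ,
    (L.map g).sublistsLen k = (L.sublistsLen k).map (List.map g) := by
  induction L with
  | nil => intro k; cases k <;> simp
  | cons x L ih =>
    intro k
    cases k with
    | zero => simp
    | succ k =>
      simp [List.sublistsLen_succ_cons, ih, Function.comp_def]

theorem count_fin :
    Nat.card {S : Finset (Fin 21) // S.card = 6 ∧
      ∀ p ∈ S, ∀ q ∈ S, ∀ r ∈ S, col p q r = false} = 168 := by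
  classical
  let R : Multiset (Fin 21) → Prop := fun m => ∀ p ∈ m, ∀ q ∈ m, ∀ r ∈ m, col p q r = false
  have h1 : Nat.card {S : Finset (Fin 21) // S.card = 6 ∧
      ∀ p ∈ S, ∀ q ∈ S, ∀ r ∈ S, col p q r = false} =
      (((Finset.univ : Finset (Fin 21)).powersetCard 6).filter (fun S => R S.val)).card := by
    rw [Nat.card_eq_fintype_card]
    apply Fintype.card_of_subtype
    intro S
    simp [R]
  rw [h1, Finset.card_def, Finset.filter_val, ← Multiset.countP_eq_card_filter]
  have h2 := Multiset.countP_map Finset.val (((Finset.univ : Finset (Fin 21)).powersetCard 6).val) R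
  rw [← Multiset.countP_eq_card_filter] at h2
  rw [← h2, Finset.map_val_val_powersetCard]
  have h3 : (Finset.univ : Finset (Fin 21)).val = ((List.finRange 21 : List (Fin 21)) : Multiset (Fin 21)) := rfl
  rw [h3, Multiset.powersetCard_coe, Multiset.coe_countP, List.countP_map]
  have h4 : ((List.finRange 21).map Fin.val) =
    [0,1,2,3,4,5,6,7,8,9,10,11,12,13,14,15,16,17,18,19,20] := by decide
  have h5 := f_val
  rw [← h4, f_eq, sublistsLen_map', List.countP_map] at h5
  rw [← h5]
  apply List.countP_congr
  intro T _
  simp only [Function.comp_apply, decide_eq_true_eq]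
  rw [P_iff _ _ (by simp) (by simp) (by simp [arc])]
  simp [R, arc]

theorem exists_gen : ∃ a : GaloisField 2 2, a * a = a + 1 ∧ ∀ x : GaloisField 2 2,
    x = 0 ∨ x = 1 ∨ x = a ∨ x = a + 1 := by
  classical
  have : Fintype (GaloisField 2 2) := Fintype.ofFinite _
  have hc : Fintype.card (GaloisField 2 2) = 4 := by
    rw [← Nat.card_eq_fintype_card, GaloisField.card 2 2 (by norm_num)]; norm_num
  have h2 : (2 : GaloisField 2 2) = 0 := CharTwo.two_eq_zero
  have hx : ∃ a : GaloisField 2 2, a ∉ ({0, 1} : Finset (GaloisField 2 2)) := by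
    by_contra! h
    have h1 : (Finset.univ : Finset (GaloisField 2 2)) ⊆ {0, 1} := fun x _ => h x
    have := Finset.card_le_card h1
    rw [Finset.card_univ, hc] at this
    have := this.trans Finset.card_le_two
    omega
  obtain ⟨a, ha⟩ := hx
  simp only [Finset.mem_insert, Finset.mem_singleton, not_or] at ha
  have hp : a ^ 4 = a := by
    have := FiniteField.pow_card a
    rwa [hc] at this
  have hq : a * a = a + 1 := by
    have h : a * (a - 1) * (a * a + a + 1) = 0 := by linear_combination hp
    rcases mul_eq_zero.1 h with h | h
    · rcases mul_eq_zero.1 h with h | h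
      · exact absurd h ha.1
      · exact absurd (sub_eq_zero.1 h) ha.2
    · linear_combination h - (a + 1) * h2
  refine ⟨a, hq, fun x => ?_⟩
  have hp : x ^ 4 = x := by
    have := FiniteField.pow_card x
    rwa [hc] at this
  have h : x * ((x - 1) * ((x - a) * (x - (a + 1)))) = 0 := by
    grind
  simpa [sub_eq_zero] using h

noncomputable def gen : GaloisField 2 2 := exists_gen.choose
theorem gen_sq : gen * gen = gen + 1 := exists_gen.choose_spec.1
theorem gen_all (x : GaloisField 2 2) : x = 0 ∨ x = 1 ∨ x = gen ∨ x = gen + 1 :=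
  exists_gen.choose_spec.2 x

noncomputable def φ : ℕ → GaloisField 2 2
  | 0 => 0
  | 1 => 1
  | 2 => gen
  | _ => gen + 1

theorem two_zero : (2 : GaloisField 2 2) = 0 := CharTwo.two_eq_zero

theorem φ_add (i j : ℕ) (hi : i < 4) (hj : j < 4) : φ (i ^^^ j) = φ i + φ j := by
  have h2 := two_zero
  interval_cases i <;> interval_cases j <;> simp [φ] <;> grind

theorem φ_mul (i j : ℕ) (hi : i < 4) (hj : j < 4) : φ (m4 i j) = φ i * φ j := by
  have h2 := two_zero
  have h3 := gen_sq
  interval_cases i <;> interval_cases j <;> simp [φ, m4] <;> grind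

theorem φ_surj (x : GaloisField 2 2) : ∃ i < 4, φ i = x := by
  rcases gen_all x with h | h | h | h
  · exact ⟨0, by norm_num, h.symm⟩
  · exact ⟨1, by norm_num, h.symm⟩
  · exact ⟨2, by norm_num, h.symm⟩
  · exact ⟨3, by norm_num, h.symm⟩

theorem φ_zero (i : ℕ) (hi : i < 4) : φ i = 0 ↔ i = 0 := by
  have h2 := two_zero
  have h3 := gen_sq
  interval_cases i <;> simp [φ]
  · intro h; simp [h] at h3
  · intro h
    have : gen * (gen + 1) = 1 := by linear_combination h3 + gen * h2
    simp [h] at this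

theorem m4_lt (i j : ℕ) : m4 i j < 4 := Nat.mod_lt _ (by norm_num)
theorem V0_lt (i : ℕ) : V0 i < 4 := Nat.mod_lt _ (by norm_num)
theorem V1_lt (i : ℕ) : V1 i < 4 := Nat.mod_lt _ (by norm_num)
theorem V2_lt (i : ℕ) : V2 i < 4 := Nat.mod_lt _ (by norm_num)
theorem xor_lt {i j : ℕ} (hi : i < 4) (hj : j < 4) : i ^^^ j < 4 :=
  Nat.xor_lt_two_pow (n := 2) hi hj

noncomputable def vec (i : ℕ) : Fin 3 → GaloisField 2 2 := ![φ (V0 i), φ (V1 i), φ (V2 i)]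

theorem det_eq (x y z : ℕ) : φ (det4 x y z) = Matrix.det (Matrix.of ![vec x, vec y, vec z]) := by
  have h2 := two_zero
  rw [Matrix.det_fin_three]
  simp only [det4, φ_add, φ_mul, m4_lt, V0_lt, V1_lt, V2_lt, xor_lt]
  simp [vec]
  grind

theorem det4_lt (x y z : ℕ) : det4 x y z < 4 :=
  xor_lt (m4_lt _ _) (xor_lt (m4_lt _ _) (m4_lt _ _))

theorem vec_ne (i : Fin 21) : vec i ≠ 0 := by
  intro h
  have h0 := congrFun h 0
  have h1 := congrFun h 1
  have h2 := congrFun h 2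
  simp [vec, φ_zero, V0_lt, V1_lt, V2_lt] at h0 h1 h2
  have : ∀ i : Fin 21, ¬ (V0 i = 0 ∧ V1 i = 0 ∧ V2 i = 0) := by decide +kernel
  exact this i ⟨h0, h1, h2⟩

noncomputable def pt (i : Fin 21) : ℙ (GaloisField 2 2) (Fin 3 → GaloisField 2 2) :=
  Projectivization.mk _ (vec i) (vec_ne i)

theorem dep_iff (x y z : Fin 21) :
    Projectivization.Dependent ![pt x, pt y, pt z] ↔ det4 x y z = 0 := by
  have hne : ∀ i : Fin 3, ![vec x, vec y, vec z] i ≠ 0 := by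
    intro i; fin_cases i
    · exact vec_ne x
    · exact vec_ne y
    · exact vec_ne z
  have he : ![pt x, pt y, pt z] =
      fun i => Projectivization.mk (GaloisField 2 2) (![vec x, vec y, vec z] i) (hne i) := by
    funext i; fin_cases i <;> rfl
  have hl : LinearIndependent (GaloisField 2 2) ![vec x, vec y, vec z] ↔ det4 x y z ≠ 0 := by
    have := Matrix.linearIndependent_rows_iff_isUnit (A := Matrix.of ![vec x, vec y, vec z])
    rw [Matrix.isUnit_iff_isUnit_det, isUnit_iff_ne_zero, ← det_eq, Ne, φ_zero _ (det4_lt _ _ _)] at this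
    exact this
  rw [he]
  constructor
  · intro h
    by_contra h0
    rw [Projectivization.dependent_iff_not_independent] at h
    exact h (Projectivization.Independent.mk _ hne (hl.2 h0))
  · intro h
    exact Projectivization.Dependent.mk _ hne (fun h' => hl.1 h' h)

theorem pt_surj : Function.Surjective pt := by
  intro p
  induction p using Projectivization.ind with
  | h v hv =>
  obtain ⟨a, ha, ha'⟩ := φ_surj (v 0)
  obtain ⟨b, hb, hb'⟩ := φ_surj (v 1)
  obtain ⟨c, hc, hc'⟩ := φ_surj (v 2)
  have key : ∀ a b c : Fin 4, ¬ (a.1 = 0 ∧ b.1 = 0 ∧ c.1 = 0) →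
      ∃ i : Fin 21, ∃ k : Fin 4, m4 k a = V0 i ∧ m4 k b = V1 i ∧ m4 k c = V2 i := by
    decide +kernel
  obtain ⟨i, k, h0, h1, h2⟩ := key ⟨a, ha⟩ ⟨b, hb⟩ ⟨c, hc⟩ (by
    rintro ⟨rfl, rfl, rfl⟩
    apply hv
    funext j
    fin_cases j
    · simpa [φ] using ha'.symm
    · simpa [φ] using hb'.symm
    · simpa [φ] using hc'.symm)
  refine ⟨i, ?_⟩
  rw [pt, Projectivization.mk_eq_mk_iff']
  refine ⟨φ k, ?_⟩
  funext j
  fin_cases j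
  · simp [vec, ← h0, φ_mul _ _ k.2 ha, ha']
  · simp [vec, ← h1, φ_mul _ _ k.2 hb, hb']
  · simp [vec, ← h2, φ_mul _ _ k.2 hc, hc']

theorem pt_bij : Function.Bijective pt := by
  rw [Nat.bijective_iff_surjective_and_card]
  refine ⟨pt_surj, ?_⟩
  rw [Projectivization.card_of_finrank (GaloisField 2 2) (Fin 3 → GaloisField 2 2) (n := 3) (by simp),
    GaloisField.card 2 2 (by norm_num)]
  simp [Finset.sum_range_succ]

end Arc

/-- There are exactly 168 six-element subsets of `ℙ²(𝔽₄)` with no three points collinear. -/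
theorem stmt_6 :
    Nat.card {S : Finset (ℙ (GaloisField 2 2) (Fin 3 → GaloisField 2 2)) //
      S.card = 6 ∧ NoThreeCollinear ↑S} = 168 := by
  rw [← Arc.count_fin]
  symm
  let e := Equiv.ofBijective Arc.pt Arc.pt_bij
  have he : ∀ x, e x = Arc.pt x := fun _ => rfl
  refine Nat.card_congr (e.finsetCongr.subtypeEquiv ?_)
  intro S
  simp only [Equiv.finsetCongr_apply, Finset.card_map, NoThreeCollinear, Finset.coe_map,
    Set.forall_mem_image, Equiv.coe_toEmbedding, Finset.mem_coe, he, Arc.pt_bij.1.ne_iff, Arc.dep_iff]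
  refine and_congr_right fun _ => ?_
  refine forall₂_congr fun x _ => forall₂_congr fun y _ => forall₂_congr fun z _ => ?_
  have := Arc.col_det x x.2 y y.2 z z.2
  rw [← Bool.not_eq_true, this]
  simp only [Ne, Fin.ext_iff]
  tauto
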